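/- arXiv:2004.14317 — 2 statements merged into one kernel-verified Lean document; each statement's English description precedes it below -/
import Mathlib

section
/- Let $n \geq 2$, let $x_0 \in \mathbb{R}^n$, $\varepsilon_0 > 0$, and let $f$ be a continuous map defined on the punctured closed ball $\{ x : 0 < \Vert x - x_0 \Vert \leq \varepsilon_0 \}$ with values in $\mathbb{R}^n$. Let $y_1 \in \mathbb{R}^n$ and $\varepsilon_1 > 0$ be such that $f(S(x_0, \varepsilon_0)) \cap \overline{B(y_1, \varepsilon_1)} = \varnothing$, where $S(x_0,\varepsilon_0) = \{x : \Vert x - x_0 \Vert = \varepsilon_0\}$. Let $c \in (0, \infty]$ and let $\gamma : [0, c) \to B(x_0, \varepsilon_0) \setminus \{x_0\}$ be a continuous curve such that $f(\gamma(t)) \in \overline{B(y_1, \varepsilon_1)}$ for all $t \in [0, c)$, and such that the distance from $\gamma(t)$ to the frontier $S(x_0,\varepsilon_0) \cup \{x_0\}$ of the punctured ball tends to $0$ as $t \to c^-$. Then $\gamma(t) \to x_0$ as $t \to c^-$. -/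
/-! The distance condition says that `γ` converges to the compact set `S(x₀, ε₀) ∪ {x₀}`, in the
sense of the filter `𝓝ˢ S(x₀, ε₀) ⊔ 𝓝 x₀`. Since `f` is continuous up to the sphere and maps it off
the closed ball around `y₁`, the points with image in that closed ball stay out of a neighbourhood
of the sphere. This rules out the first part of the filter and leaves `𝓝 x₀`. -/

open Set Metric Filter Topology ENNReal

/-- The filter on `ℝ` describing `t → c⁻` within the interval `[0, c)`, where
`c ∈ (0, ∞]` is an extended nonnegative real. For finite `c` this is the usual
left limit `t → c⁻` (with `t ≥ 0`), and for `c = ∞` it is `t → +∞`. -/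
noncomputable def leftEndFilter (c : ℝ≥0∞) : Filter ℝ :=
  Filter.comap ENNReal.ofReal (𝓝[<] c) ⊓ Filter.principal (Ici (0 : ℝ))

section

variable {ι X Y : Type*} {l : Filter ι} {γ : ι → X} {f : X → Y} {D S : Set X} {K : Set Y}

theorem tendsto_nhdsSet_iff_tendsto_infDist [PseudoMetricSpace X] (hS : IsCompact S)
    (hne : S.Nonempty) :
    Tendsto γ l (𝓝ˢ S) ↔ Tendsto (fun t => infDist (γ t) S) l (𝓝 0) := by
  simp only [Metric.tendsto_nhdsSet hS hne, Metric.tendsto_nhds, Real.dist_0_eq_abs,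
    abs_of_nonneg infDist_nonneg]

theorem closure_inter_preimage_inter_subset [TopologicalSpace X] [TopologicalSpace Y]
    (hf : ContinuousOn f D) (hK : IsClosed K) : closure (D ∩ f ⁻¹' K) ∩ D ⊆ f ⁻¹' K := by
  obtain ⟨F, hF, hFD⟩ := continuousOn_iff_isClosed.1 hf K hK
  have hclosure : closure (D ∩ f ⁻¹' K) ⊆ F :=
    closure_minimal (fun x hx => (hFD.subset hx.symm).1) hF
  exact fun x hx => (hFD.superset ⟨hclosure hx.1, hx.2⟩).1

theorem disjoint_nhdsSet_principal_inter_preimage [TopologicalSpace X] [TopologicalSpace Y]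
    (hf : ContinuousOn f D) (hSD : S ⊆ D) (hK : IsClosed K) (hSK : Disjoint (f '' S) K) :
    Disjoint (𝓝ˢ S) (𝓟 (D ∩ f ⁻¹' K)) := by
  refine disjoint_nhdsSet_principal.2 (Set.disjoint_left.2 fun x hxS hx => ?_)
  exact Set.disjoint_left.1 hSK (mem_image_of_mem f hxS)
    (closure_inter_preimage_inter_subset hf hK ⟨hx, hSD hxS⟩)

theorem isolated_sing_stmt5_general [PseudoMetricSpace X] [TopologicalSpace Y] {x₀ : X}
    (hS : IsCompact S) (hSD : S ⊆ D) (hf : ContinuousOn f D) (hK : IsClosed K)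
    (hSK : Disjoint (f '' S) K) (hγD : ∀ᶠ t in l, γ t ∈ D) (hfγ : ∀ᶠ t in l, f (γ t) ∈ K)
    (hdist : Tendsto (fun t => infDist (γ t) (S ∪ {x₀})) l (𝓝 0)) :
    Tendsto γ l (𝓝 x₀) := by
  have hunion : Tendsto γ l (𝓝ˢ S ⊔ 𝓝 x₀) := by
    rw [← nhdsSet_singleton, ← nhdsSet_union]
    exact (tendsto_nhdsSet_iff_tendsto_infDist (hS.union isCompact_singleton)
      (singleton_nonempty x₀).inr).2 hdist
  have hpre : Tendsto γ l (𝓟 (D ∩ f ⁻¹' K)) := tendsto_principal.2 (hγD.and hfγ)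
  have hdisj : Disjoint (map γ l) (𝓝ˢ S) :=
    (disjoint_nhdsSet_principal_inter_preimage hf hSD hK hSK).symm.mono_left hpre
  exact hdisj.left_le_of_le_sup_left hunion

end

theorem eventually_leftEndFilter_of_forall {c : ℝ≥0∞} {p : ℝ → Prop}
    (h : ∀ t : ℝ, 0 ≤ t → ENNReal.ofReal t < c → p t) : ∀ᶠ t in leftEndFilter c, p t := by
  have hlt : ∀ᶠ t in comap ENNReal.ofReal (𝓝[<] c), ENNReal.ofReal t < c :=
    tendsto_comap.eventually eventually_mem_nhdsWithin
  have hnonneg : ∀ᶠ t in 𝓟 (Ici (0 : ℝ)), 0 ≤ t := mem_principal_self _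
  filter_upwards [hlt.filter_mono inf_le_left, hnonneg.filter_mono inf_le_right] with t htc ht
  exact h t ht htc

theorem sphere_subset_closedBall_sdiff_center {X : Type*} [PseudoMetricSpace X] (x : X) {ε : ℝ}
    (hε : ε ≠ 0) : sphere x ε ⊆ closedBall x ε \ {x} :=
  fun _ hy => ⟨sphere_subset_closedBall hy, ne_of_mem_sphere hy hε⟩

/-- Let `n ≥ 2`, `x₀ ∈ ℝⁿ`, `ε₀ > 0`, and let `f` be continuous on the
punctured closed ball `closedBall x₀ ε₀ \ {x₀}`. Let `y₁ ∈ ℝⁿ`, `ε₁ > 0` with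
`f(S(x₀,ε₀)) ∩ closedBall y₁ ε₁ = ∅`. Let `c ∈ (0,∞]` and let `γ : [0,c) → ball x₀ ε₀ \ {x₀}`
be a continuous curve with `f(γ(t)) ∈ closedBall y₁ ε₁` for all `t ∈ [0,c)`, such that the
distance from `γ(t)` to the frontier `S(x₀,ε₀) ∪ {x₀}` of the punctured ball tends to `0`
as `t → c⁻`. Then `γ(t) → x₀` as `t → c⁻`. -/
theorem isolated_sing_stmt5 {n : ℕ} (hn : 2 ≤ n)
    (x₀ y₁ : EuclideanSpace ℝ (Fin n)) (ε₀ ε₁ : ℝ) (hε₀ : 0 < ε₀) (hε₁ : 0 < ε₁)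
    (f : EuclideanSpace ℝ (Fin n) → EuclideanSpace ℝ (Fin n))
    (hf : ContinuousOn f (closedBall x₀ ε₀ \ {x₀}))
    (hdisj : f '' (sphere x₀ ε₀) ∩ closedBall y₁ ε₁ = ∅)
    (c : ℝ≥0∞) (hc : 0 < c)
    (γ : ℝ → EuclideanSpace ℝ (Fin n))
    (hγcont : ContinuousOn γ {t : ℝ | 0 ≤ t ∧ ENNReal.ofReal t < c})
    (hγmem : ∀ t : ℝ, 0 ≤ t → ENNReal.ofReal t < c → γ t ∈ ball x₀ ε₀ \ {x₀})
    (hfγ : ∀ t : ℝ, 0 ≤ t → ENNReal.ofReal t < c → f (γ t) ∈ closedBall y₁ ε₁)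
    (hdist : Tendsto (fun t => infDist (γ t) (sphere x₀ ε₀ ∪ {x₀}))
      (leftEndFilter c) (𝓝 0)) :
    Tendsto γ (leftEndFilter c) (𝓝 x₀) := by
  have hmem : ∀ᶠ t in leftEndFilter c, γ t ∈ closedBall x₀ ε₀ \ {x₀} :=
    eventually_leftEndFilter_of_forall fun t ht htc =>
      sdiff_subset_sdiff_left ball_subset_closedBall (hγmem t ht htc)
  exact isolated_sing_stmt5_general (isCompact_sphere x₀ ε₀)
    (sphere_subset_closedBall_sdiff_center x₀ hε₀.ne') hf isClosed_closedBall
    (disjoint_iff_inter_eq_empty.2 hdisj) hmem (eventually_leftEndFilter_of_forall hfγ) hdist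
end

section
/- Let $n \geq 2$, let $D \subseteq \mathbb{R}^n$ be open, $x_0 \in D$, and let $f : D \setminus \{x_0\} \to \mathbb{R}^n$ be continuous, open (the image of every open subset of $D \setminus \{x_0\}$ is open) and discrete (for every $y \in \mathbb{R}^n$ the fiber $f^{-1}(y)$ consists of isolated points). Let $D' := f(D \setminus \{x_0\})$ and assume that the cluster set satisfies $C(f, x_0) \subseteq \partial D'$. Suppose $y_1, y_2 \in C(f, x_0)$ with $y_1 \neq y_2$, both in $\mathbb{R}^n$, and let $\varepsilon_0 > 0$ be such that $\overline{B(x_0, \varepsilon_0)} \subseteq D$ and $B(y_1,\varepsilon_1) \cap f(S(x_0,\varepsilon_0)) = \varnothing = B(y_2,\varepsilon_2) \cap f(S(x_0,\varepsilon_0))$ for some $\varepsilon_1, \varepsilon_2 > 0$ with $\overline{B(y_1,\varepsilon_1)} \cap \overline{B(y_2,\varepsilon_2)} = \varnothing$. Then there exist $c_1, c_2 \in (0, \infty]$ and continuous curves $\alpha : [0, c_1) \to B(x_0, \varepsilon_0) \setminus \{x_0\}$ and $\beta : [0, c_2) \to B(x_0, \varepsilon_0) \setminus \{x_0\}$ such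 that $f(\alpha(t)) \in B(y_1, \varepsilon_1)$ for all $t \in [0, c_1)$, $f(\beta(t)) \in B(y_2, \varepsilon_2)$ for all $t \in [0, c_2)$, and $\alpha(t) \to x_0$ as $t \to c_1^-$ and $\beta(t) \to x_0$ as $t \to c_2^-$. -/
open Set Metric Filter Topology ENNReal

/-- The cluster set `C(f, x₀)` of a map `f` defined on `S = D \ {x₀}`: the set of all
limits `y` of sequences `f (x k)` where `x k ∈ S` and `x k → x₀`. -/
def clusterSetAt {n : ℕ} (f : EuclideanSpace ℝ (Fin n) → EuclideanSpace ℝ (Fin n))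
    (S : Set (EuclideanSpace ℝ (Fin n))) (x₀ : EuclideanSpace ℝ (Fin n)) :
    Set (EuclideanSpace ℝ (Fin n)) :=
  {y | ∃ x : ℕ → EuclideanSpace ℝ (Fin n), (∀ k, x k ∈ S) ∧
    Tendsto x atTop (𝓝 x₀) ∧ Tendsto (f ∘ x) atTop (𝓝 y)}

/-!
Let `G` be the punctured ball `B(x₀, ε₀) \ {x₀}` and `V` the ball around a cluster value `y`. Since
`y` lies in the frontier of the open set `D'`, it is not attained, so a path in `V` from an
attained value to `y` leaves the open set `f(G)` at a first time `c`, at some point `w`. Before time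
`c` the path meets no cluster value of `f` at a frontier point of `G`. Hence a path component of the
preimage of a neighbourhood of a terminal piece of the path, as soon as it contains one point over
that piece, has an image covering it: the image is open, and relatively closed because limits can
only be lost at the frontier. One can therefore join points over later and later pieces inside
preimages of shrinking neighbourhoods of `w`. The infinite concatenation `α` satisfies `f ∘ α → w`,
and since `w` is not in `f(G)`, `α` can only accumulate at `x₀`. The curve `f ∘ α` follows the path
only asymptotically, which makes maximal liftings unnecessary.
-/

section InfiniteConcatenation

variable {X : Type*} [TopologicalSpace X]

/-- The infinite concatenation of a sequence of paths, as a curve on `[0, ∞)` which runs through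
`γ k` on `[k, k + 1]`. -/
noncomputable def concatPaths {x : ℕ → X} (γ : ∀ k, Path (x k) (x (k + 1))) (t : ℝ) : X :=
  (γ ⌊t⌋₊).extend (t - ⌊t⌋₊)

theorem eqOn_concatPaths_Icc {x : ℕ → X} (γ : ∀ k, Path (x k) (x (k + 1))) (k : ℕ) :
    EqOn (concatPaths γ) (fun t ↦ (γ k).extend (t - k)) (Icc k (k + 1)) := by
  rintro t ⟨hkt, htk⟩
  rcases htk.eq_or_lt with rfl | htk
  · have hfloor : ⌊(k : ℝ) + 1⌋₊ = k + 1 := by exact_mod_cast Nat.floor_natCast (k + 1)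
    simp [concatPaths, hfloor]
  · obtain rfl : ⌊t⌋₊ = k := (Nat.floor_eq_iff (k.cast_nonneg.trans hkt)).2 ⟨hkt, htk⟩
    rfl

theorem locallyFinite_Icc_natCast_add_one :
    LocallyFinite fun k : ℕ ↦ Icc (k : ℝ) (k + 1) := by
  have hint : LocallyFinite fun k : ℤ ↦ Icc (k : ℝ) (k + 1) :=
    locallyFinite_Icc_of_tendsto tendsto_intCast_atTop_atTop
      (tendsto_atBot_add_const_right _ _ (tendsto_intCast_atBot_iff.2 tendsto_id))
  simpa [Function.comp_def] using hint.comp_injective Nat.cast_injective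

theorem continuousOn_concatPaths {x : ℕ → X} (γ : ∀ k, Path (x k) (x (k + 1))) :
    ContinuousOn (concatPaths γ) (Ici 0) := by
  have hcover : Ici (0 : ℝ) ⊆ ⋃ k : ℕ, Icc (k : ℝ) (k + 1) := fun t ht ↦
    mem_iUnion.2 ⟨⌊t⌋₊, Nat.floor_le ht, (Nat.lt_floor_add_one t).le⟩
  refine (locallyFinite_Icc_natCast_add_one.continuousOn_iUnion (fun _ ↦ isClosed_Icc)
    fun k ↦ ?_).mono hcover
  have hcont : Continuous fun t : ℝ ↦ (γ k).extend (t - k) := by fun_prop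
  exact hcont.continuousOn.congr (eqOn_concatPaths_Icc γ k)

theorem exists_curve_of_forall_exists_joinedIn {Q A : ℕ → Set X} (hQ : (Q 0).Nonempty)
    (hjoin : ∀ k, ∀ x ∈ Q k, ∃ x' ∈ Q (k + 1), JoinedIn (A k) x x') :
    ∃ α : ℝ → X, ContinuousOn α (Ici 0) ∧ ∀ t, 0 ≤ t → α t ∈ A ⌊t⌋₊ := by
  choose! next hnext hnextJoin using hjoin
  obtain ⟨a, ha⟩ := hQ
  let x : ℕ → X := fun k ↦ Nat.rec a next k
  have hx : ∀ k, x k ∈ Q k := fun k ↦ Nat.rec ha (fun k ih ↦ hnext k _ ih) k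
  have hjoined : ∀ k, JoinedIn (A k) (x k) (x (k + 1)) := fun k ↦ hnextJoin k _ (hx k)
  let γ : ∀ k, Path (x k) (x (k + 1)) := fun k ↦ (hjoined k).somePath
  refine ⟨concatPaths γ, continuousOn_concatPaths γ, fun t _ ↦ ?_⟩
  exact (hjoined ⌊t⌋₊).somePath_mem (projIcc 0 1 zero_le_one (t - ⌊t⌋₊))

end InfiniteConcatenation

section ClusterValues

variable {X Y : Type*} [TopologicalSpace X] [TopologicalSpace Y]

theorem eq_of_tendsto_of_mapClusterPt {ι : Type*} [T2Space Y] {l : Filter ι} {u : ι → Y} {y z : Y}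
    (hu : Tendsto u l (𝓝 y)) (hz : MapClusterPt z l u) : z = y :=
  eq_of_nhds_neBot (NeBot.mono hz (inf_le_inf_left _ hu))

theorem exists_mapClusterPt_of_mem_closure_image {f : X → Y} {K S : Set X} {z : Y}
    (hK : IsCompact K) (hSK : S ⊆ K) (hz : z ∈ closure (f '' S)) :
    ∃ a ∈ K, MapClusterPt z (𝓝[S] a) f := by
  have hne : NeBot (comap f (𝓝 z) ⊓ 𝓟 S) := by
    rw [← map_neBot_iff f, Filter.push_pull', map_principal]
    exact mem_closure_iff_clusterPt.1 hz
  obtain ⟨a, haK, ha⟩ := hK.exists_clusterPt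
    (inf_le_right.trans (principal_mono.2 hSK) : comap f (𝓝 z) ⊓ 𝓟 S ≤ 𝓟 K)
  refine ⟨a, haK, ?_⟩
  rw [MapClusterPt, ClusterPt, ← Filter.push_pull', map_neBot_iff, nhdsWithin, inf_left_comm]
  exact ha

/-- The set of all cluster values of `f` at frontier points of `G`, approached from within `G`.
If `closure G` is compact, it is only in this set that limits of values of a continuous `f` on `G`
can fail to be attained in `G`. -/
def frontierClusterSet (f : X → Y) (G : Set X) : Set Y :=
  {z | ∃ a ∈ frontier G, MapClusterPt z (𝓝[G] a) f}

variable [T2Space Y] {f : X → Y} {G : Set X}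

theorem exists_mem_closure_eq_of_mem_closure_image {S : Set X} {z : Y} (hG : IsOpen G)
    (hGc : IsCompact (closure G)) (hf : ContinuousOn f G) (hSG : S ⊆ G)
    (hz : z ∈ closure (f '' S)) (hzG : z ∉ frontierClusterSet f G) :
    ∃ a ∈ G ∩ closure S, f a = z := by
  obtain ⟨a, hacl, ha⟩ :=
    exists_mapClusterPt_of_mem_closure_image hGc (hSG.trans subset_closure) hz
  have haS : a ∈ closure S := mem_closure_iff_nhdsWithin_neBot.2 (map_neBot_iff f |>.1
    (NeBot.mono ha inf_le_right))
  have haG : a ∈ G := by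
    by_contra hnot
    exact hzG ⟨a, hG.frontier_eq ▸ ⟨hacl, hnot⟩, ha.mono (nhdsWithin_mono a hSG)⟩
  exact ⟨a, ⟨haG, haS⟩, (eq_of_tendsto_of_mapClusterPt ((hf a haG).mono hSG) ha).symm⟩

theorem tendsto_of_tendsto_comp_of_notMem_image {ι : Type*} {K : Set X} {x₀ : X} {w : Y}
    {l : Filter ι} {α : ι → X} (hK : IsCompact K) (hf : ContinuousOn f (K \ {x₀}))
    (hα : ∀ᶠ t in l, α t ∈ K \ {x₀}) (hfα : Tendsto (f ∘ α) l (𝓝 w))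
    (hw : w ∉ f '' (K \ {x₀})) : Tendsto α l (𝓝 x₀) := by
  refine hK.tendsto_nhds_of_unique_mapClusterPt (hα.mono fun _ ht ↦ ht.1) fun z hzK hz ↦ ?_
  by_contra hne
  have hlim : Tendsto f (𝓝 z ⊓ map α l) (𝓝 (f z)) :=
    (hf z ⟨hzK, hne⟩).mono_left (inf_le_inf_left _ (le_principal_iff.2 hα))
  exact hw ⟨z, ⟨hzK, hne⟩, eq_of_tendsto_of_mapClusterPt hfα (hz.tendsto_comp' hlim)⟩

end ClusterValues

section AsymptoticLift

variable {X Y : Type*} [TopologicalSpace X] [LocallyPathConnectedSpace X] [TopologicalSpace Y]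

theorem mem_pathComponentIn_of_mem_closure {F : Set X} {a x : X} (hF : IsOpen F) (ha : a ∈ F)
    (hax : a ∈ closure (pathComponentIn F x)) : a ∈ pathComponentIn F x := by
  obtain ⟨b, hab, hxb⟩ :=
    mem_closure_iff.1 hax _ (hF.pathComponentIn a) (mem_pathComponentIn_self ha)
  exact hxb.trans hab.symm

theorem exists_strictMono_image_Ico_subset {ι : Type*} [LinearOrder ι] [TopologicalSpace ι]
    [OrderTopology ι] [DenselyOrdered ι] [FirstCountableTopology ι] {p : ι → Y} {b c : ι} {w : Y}
    {W : ℕ → Set Y}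
    (hbc : b < c) (hpw : Tendsto p (𝓝[<] c) (𝓝 w)) (hW : ∀ k, W k ∈ 𝓝 w) :
    ∃ u : ℕ → ι, StrictMono u ∧ (∀ k, u k ∈ Ioo b c) ∧ ∀ k, p '' Ico (u k) c ⊆ W k := by
  obtain ⟨v, hvmono, hv, hvlim⟩ := exists_seq_strictMono_tendsto' hbc
  have hlate : ∀ k, ∀ᶠ m in atTop, p '' Ico (v m) c ⊆ W k := by
    intro k
    obtain ⟨d, hdc, hd⟩ := (mem_nhdsLT_iff_exists_Ioo_subset' hbc).1 (hpw (hW k))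
    filter_upwards [hvlim.eventually (lt_mem_nhds hdc)] with m hm
    exact image_subset_iff.2 fun t ht ↦ hd ⟨hm.trans_le ht.1, ht.2⟩
  obtain ⟨φ, hφ, hφW⟩ := extraction_forall_of_eventually hlate
  exact ⟨v ∘ φ, hvmono.comp hφ, fun k ↦ hv (φ k), hφW⟩

variable [T2Space Y] {f : X → Y} {G : Set X}

theorem subset_image_pathComponentIn {P W : Set Y} {x : X} (hG : IsOpen G)
    (hGc : IsCompact (closure G)) (hf : ContinuousOn f G)
    (hopen : ∀ U ⊆ G, IsOpen U → IsOpen (f '' U)) (hP : IsPreconnected P)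
    (hPG : Disjoint P (frontierClusterSet f G)) (hW : IsOpen W) (hPW : P ⊆ W)
    (hx : x ∈ G ∩ f ⁻¹' P) : P ⊆ f '' pathComponentIn (G ∩ f ⁻¹' W) x := by
  set F := G ∩ f ⁻¹' W
  have hFo : IsOpen F := hf.isOpen_inter_preimage hG hW
  have hVG : pathComponentIn F x ⊆ G := pathComponentIn_subset.trans inter_subset_left
  have hxV : x ∈ pathComponentIn F x := mem_pathComponentIn_self ⟨hx.1, hPW hx.2⟩
  refine hP.subset_of_closure_inter_subset (hopen _ hVG (hFo.pathComponentIn x))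
    ⟨f x, hx.2, mem_image_of_mem f hxV⟩ ?_
  rintro z ⟨hz, hzP⟩
  obtain ⟨a, ⟨haG, haV⟩, rfl⟩ := exists_mem_closure_eq_of_mem_closure_image hG hGc hf hVG hz
    (disjoint_left.1 hPG hzP)
  exact mem_image_of_mem f (mem_pathComponentIn_of_mem_closure hFo ⟨haG, hPW hzP⟩ haV)

theorem exists_asymptotic_lift [FirstCountableTopology Y] {ι : Type*}
    [ConditionallyCompleteLinearOrder ι] [TopologicalSpace ι] [OrderTopology ι] [DenselyOrdered ι]
    [FirstCountableTopology ι] {p : ι → Y} {b c : ι} {w : Y} {V : Set Y}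
    (hG : IsOpen G) (hGc : IsCompact (closure G)) (hf : ContinuousOn f G)
    (hopen : ∀ U ⊆ G, IsOpen U → IsOpen (f '' U)) (hbc : b < c) (hp : ContinuousOn p (Ico b c))
    (hpw : Tendsto p (𝓝[<] c) (𝓝 w)) (hpG : MapsTo p (Ico b c) (f '' G \ frontierClusterSet f G))
    (hV : V ∈ 𝓝 w) :
    ∃ α : ℝ → X, ContinuousOn α (Ici 0) ∧ (∀ t, 0 ≤ t → α t ∈ G ∩ f ⁻¹' V) ∧
      Tendsto (f ∘ α) atTop (𝓝 w) := by
  obtain ⟨W, hW, hWbasis⟩ := ((nhds_basis_opens w).restrict_subset hV).exists_antitone_subbasis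
  obtain ⟨u, humono, hu, huW⟩ := exists_strictMono_image_Ico_subset hbc hpw hWbasis.mem
  have hsub : ∀ k, Ico (u k) c ⊆ Ico b c := fun k ↦ Ico_subset_Ico_left (hu k).1.le
  have hnonempty : (G ∩ f ⁻¹' (p '' Ico (u 0) c)).Nonempty := by
    obtain ⟨a, haG, ha⟩ := (hpG (hsub 0 (left_mem_Ico.2 (hu 0).2))).1
    exact ⟨a, haG, u 0, left_mem_Ico.2 (hu 0).2, ha.symm⟩
  have hjoin : ∀ k, ∀ x ∈ G ∩ f ⁻¹' (p '' Ico (u k) c),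
      ∃ x' ∈ G ∩ f ⁻¹' (p '' Ico (u (k + 1)) c), JoinedIn (G ∩ f ⁻¹' W k) x x' := by
    intro k x hx
    have hsurj := subset_image_pathComponentIn hG hGc hf hopen
      (isPreconnected_Ico.image p (hp.mono (hsub k)))
      (disjoint_left.2 (forall_mem_image.2 fun t ht ↦ (hpG (hsub k ht)).2)) (hW k).1.2 (huW k) hx
    obtain ⟨x', hx', hfx'⟩ := hsurj ⟨u (k + 1), ⟨(humono k.lt_succ_self).le, (hu (k + 1)).2⟩, rfl⟩
    exact ⟨x', ⟨hx'.target_mem.1, u (k + 1), left_mem_Ico.2 (hu (k + 1)).2, hfx'.symm⟩, hx'⟩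
  obtain ⟨α, hαcont, hα⟩ := exists_curve_of_forall_exists_joinedIn hnonempty hjoin
  refine ⟨α, hαcont, fun t ht ↦ ⟨(hα t ht).1, (hW _).2 (hα t ht).2⟩,
    hWbasis.tendsto_right_iff.2 fun k _ ↦ ?_⟩
  filter_upwards [eventually_ge_atTop (k : ℝ)] with t ht
  exact hWbasis.antitone (Nat.le_floor ht) (hα t (k.cast_nonneg.trans ht)).2

theorem isolated_sing_stmt6_general [FirstCountableTopology Y] {x₀ : X} {y : Y} {V : Set Y}
    (hG : IsOpen G) (hGc : IsCompact (closure G)) (hx₀ : x₀ ∉ G)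
    (hf : ContinuousOn f (closure G \ {x₀})) (hopen : ∀ U ⊆ G, IsOpen U → IsOpen (f '' U))
    (hC : ∀ z, MapClusterPt z (𝓝[G] x₀) f → z ∉ f '' G) (hy : MapClusterPt y (𝓝[G] x₀) f)
    (hV : IsOpen V) (hVconn : IsPathConnected V) (hyV : y ∈ V)
    (hVG : Disjoint V (f '' (frontier G \ {x₀}))) :
    ∃ α : ℝ → X, ContinuousOn α (Ici 0) ∧ (∀ t, 0 ≤ t → α t ∈ G ∩ f ⁻¹' V) ∧
      Tendsto α atTop (𝓝 x₀) := by
  have hGsub : G ⊆ closure G \ {x₀} := subset_sdiff_singleton subset_closure hx₀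
  have hfG : ContinuousOn f G := hf.mono hGsub
  have hfcs : ∀ z ∈ V, z ∈ f '' G → z ∉ frontierClusterSet f G := by
    rintro z hzV hzG ⟨a, haG, ha⟩
    rcases eq_or_ne a x₀ with rfl | hne
    · exact hC z ha hzG
    · have hza : z = f a := eq_of_tendsto_of_mapClusterPt
        ((hf a ⟨frontier_subset_closure haG, hne⟩).mono hGsub) ha
      exact disjoint_left.1 hVG hzV ⟨a, ⟨haG, hne⟩, hza.symm⟩
  obtain ⟨a, haV, haG⟩ := ((hy.frequently (hV.mem_nhds hyV)).and_eventually
    self_mem_nhdsWithin).exists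
  obtain ⟨γ, hγV⟩ := hVconn.joinedIn (f a) haV y hyV
  obtain ⟨c, hcG, hcmin⟩ :=
    ((hopen G subset_rfl hG).isClosed_compl.preimage γ.continuous).isCompact.exists_isLeast
      ⟨1, by simpa only [mem_preimage, γ.target, mem_compl_iff] using hC y hy⟩
  have hγG : ∀ t < c, γ t ∈ f '' G := fun t ht ↦ not_not.1 fun h ↦ (hcmin h).not_gt ht
  have hc : 0 < c := unitInterval.pos_iff_ne_zero.2 fun h ↦
    hcG (by simpa only [h, γ.source] using mem_image_of_mem f haG)
  obtain ⟨α, hαcont, hα, hfα⟩ := exists_asymptotic_lift hG hGc hfG hopen hc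
    γ.continuous.continuousOn (γ.continuous.continuousWithinAt (s := Iio c))
    (fun t ht ↦ ⟨hγG t ht.2, hfcs _ (hγV t) (hγG t ht.2)⟩) (hV.mem_nhds (hγV c))
  refine ⟨α, hαcont, hα, tendsto_of_tendsto_comp_of_notMem_image hGc hf ?_ hfα ?_⟩
  · filter_upwards [eventually_ge_atTop 0] with t ht using hGsub (hα t ht).1
  · rintro ⟨z, ⟨hz, hne⟩, hzc⟩
    have hzG : z ∉ G := fun h ↦ hcG ⟨z, h, hzc⟩
    exact disjoint_left.1 hVG (hγV c) ⟨z, ⟨hG.frontier_eq ▸ ⟨hz, hzG⟩, hne⟩, hzc⟩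

end AsymptoticLift

section EuclideanSpace

variable {n : ℕ} {f : EuclideanSpace ℝ (Fin n) → EuclideanSpace ℝ (Fin n)}
  {x₀ y : EuclideanSpace ℝ (Fin n)}

theorem mem_clusterSetAt_iff_mapClusterPt {S : Set (EuclideanSpace ℝ (Fin n))} :
    y ∈ clusterSetAt f S x₀ ↔ MapClusterPt y (𝓝[S] x₀) f := by
  constructor
  · rintro ⟨x, hxS, hx, hfx⟩
    exact .of_comp (tendsto_nhdsWithin_iff.2 ⟨hx, .of_forall hxS⟩) hfx.mapClusterPt
  · intro h
    obtain ⟨x, hfx, hx⟩ := h.exists_seq_tendsto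
    obtain ⟨hx, hxS⟩ := tendsto_nhdsWithin_iff.1 hx
    obtain ⟨N, hN⟩ := eventually_atTop.1 hxS
    exact ⟨fun k ↦ x (k + N), fun k ↦ hN _ (N.le_add_left k), (tendsto_add_atTop_iff_nat N).2 hx,
      (tendsto_add_atTop_iff_nat N).2 hfx⟩

theorem exists_curve_of_mem_clusterSetAt {D : Set (EuclideanSpace ℝ (Fin n))} {r ε : ℝ}
    (hD : IsOpen D) (hf : ContinuousOn f (D \ {x₀}))
    (hopen : ∀ U ⊆ D \ {x₀}, IsOpen U → IsOpen (f '' U))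
    (hC : clusterSetAt f (D \ {x₀}) x₀ ⊆ frontier (f '' (D \ {x₀})))
    (hy : y ∈ clusterSetAt f (D \ {x₀}) x₀) (hr : 0 < r) (hball : closedBall x₀ r ⊆ D)
    (hε : 0 < ε) (hyε : ball y ε ∩ f '' sphere x₀ r = ∅) :
    ∃ α : ℝ → EuclideanSpace ℝ (Fin n), ContinuousOn α (Ici 0) ∧
      (∀ t, 0 ≤ t → α t ∈ (ball x₀ r \ {x₀}) ∩ f ⁻¹' ball y ε) ∧ Tendsto α atTop (𝓝 x₀) := by
  have hGD : ball x₀ r \ {x₀} ⊆ D \ {x₀} :=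
    sdiff_subset_sdiff_left (ball_subset_closedBall.trans hball)
  have hG : IsOpen (ball x₀ r \ {x₀}) := isOpen_ball.sdiff isClosed_singleton
  have hclosure : closure (ball x₀ r \ {x₀}) ⊆ closedBall x₀ r :=
    (closure_mono sdiff_subset).trans closure_ball_subset_closedBall
  have hfrontier : frontier (ball x₀ r \ {x₀}) \ {x₀} ⊆ sphere x₀ r := by
    rintro z ⟨hz, hne⟩
    rw [hG.frontier_eq] at hz
    exact (mem_closedBall.1 (hclosure hz.1)).antisymm (not_lt.1 fun h ↦ hz.2 ⟨h, hne⟩)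
  have himage : IsOpen (f '' (D \ {x₀})) := hopen _ subset_rfl (hD.sdiff isClosed_singleton)
  refine isolated_sing_stmt6_general hG
    ((isCompact_closedBall x₀ r).of_isClosed_subset isClosed_closure hclosure) (fun h ↦ h.2 rfl)
    (hf.mono (sdiff_subset_sdiff_left (hclosure.trans hball))) (fun U hU ↦ hopen U (hU.trans hGD))
    (fun z hz hzG ↦ ?_) ?_ isOpen_ball ((convex_ball y ε).isPathConnected ⟨y, mem_ball_self hε⟩)
    (mem_ball_self hε) ((disjoint_iff_inter_eq_empty.2 hyε).mono_right (image_mono hfrontier))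
  · have hzC : z ∈ frontier (f '' (D \ {x₀})) :=
      hC (mem_clusterSetAt_iff_mapClusterPt.2 (hz.mono (nhdsWithin_mono _ hGD)))
    exact (himage.frontier_eq ▸ hzC).2 (image_mono hGD hzG)
  · refine (mem_clusterSetAt_iff_mapClusterPt.1 hy).mono (nhdsWithin_le_iff.2 ?_)
    filter_upwards [inter_mem_nhdsWithin _ (ball_mem_nhds x₀ hr)] with z hz using ⟨hz.2, hz.1.2⟩

theorem leftEndFilter_top_le_atTop : leftEndFilter ⊤ ≤ atTop := by
  refine inf_le_left.trans (atTop_basis_Ioi.ge_iff.2 fun M _ ↦ ?_)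
  exact ⟨Ioi (ENNReal.ofReal M), mem_nhdsWithin_of_mem_nhds (Ioi_mem_nhds ENNReal.ofReal_lt_top),
    fun t ht ↦ (ENNReal.ofReal_lt_ofReal_iff'.1 ht).1⟩

end EuclideanSpace

/-- Let `n ≥ 2`, `D ⊆ ℝⁿ` open, `x₀ ∈ D`, and let
`f : D \ {x₀} → ℝⁿ` be continuous, open and discrete. Put `D' := f(D \ {x₀})` and assume
`C(f, x₀) ⊆ ∂D'`. Suppose `y₁ ≠ y₂` are two (finite) points of `C(f, x₀)`, and `ε₀ > 0`
satisfies `closedBall x₀ ε₀ ⊆ D`, while `ε₁, ε₂ > 0` satisfy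
`ball y₁ ε₁ ∩ f(S(x₀,ε₀)) = ∅ = ball y₂ ε₂ ∩ f(S(x₀,ε₀))` and
`closedBall y₁ ε₁ ∩ closedBall y₂ ε₂ = ∅`. Then there are `c₁, c₂ ∈ (0,∞]` and continuous
curves `α : [0,c₁) → ball x₀ ε₀ \ {x₀}`, `β : [0,c₂) → ball x₀ ε₀ \ {x₀}` with
`f(α(t)) ∈ ball y₁ ε₁`, `f(β(t)) ∈ ball y₂ ε₂`, and `α(t) → x₀` as `t → c₁⁻`,
`β(t) → x₀` as `t → c₂⁻`. -/
theorem isolated_sing_stmt6 {n : ℕ} (hn : 2 ≤ n)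
    (D : Set (EuclideanSpace ℝ (Fin n))) (hD : IsOpen D)
    (x₀ : EuclideanSpace ℝ (Fin n)) (hx₀ : x₀ ∈ D)
    (f : EuclideanSpace ℝ (Fin n) → EuclideanSpace ℝ (Fin n))
    (hf : ContinuousOn f (D \ {x₀}))
    (hopen : ∀ U : Set (EuclideanSpace ℝ (Fin n)), U ⊆ D \ {x₀} → IsOpen U →
      IsOpen (f '' U))
    (hdiscrete : ∀ y : EuclideanSpace ℝ (Fin n), ∀ x ∈ (D \ {x₀}) ∩ f ⁻¹' {y},
      ∃ ε > (0 : ℝ), ∀ z ∈ (D \ {x₀}) ∩ f ⁻¹' {y}, z ∈ ball x ε → z = x)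
    (hC : clusterSetAt f (D \ {x₀}) x₀ ⊆ frontier (f '' (D \ {x₀})))
    (y₁ y₂ : EuclideanSpace ℝ (Fin n)) (hy₁ : y₁ ∈ clusterSetAt f (D \ {x₀}) x₀)
    (hy₂ : y₂ ∈ clusterSetAt f (D \ {x₀}) x₀) (hy₁y₂ : y₁ ≠ y₂)
    (ε₀ : ℝ) (hε₀ : 0 < ε₀) (hball : closedBall x₀ ε₀ ⊆ D)
    (ε₁ ε₂ : ℝ) (hε₁ : 0 < ε₁) (hε₂ : 0 < ε₂)
    (hd₁ : ball y₁ ε₁ ∩ f '' (sphere x₀ ε₀) = ∅)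
    (hd₂ : ball y₂ ε₂ ∩ f '' (sphere x₀ ε₀) = ∅)
    (hdisj : closedBall y₁ ε₁ ∩ closedBall y₂ ε₂ = ∅) :
    ∃ c₁ c₂ : ℝ≥0∞, 0 < c₁ ∧ 0 < c₂ ∧
      ∃ α β : ℝ → EuclideanSpace ℝ (Fin n),
        ContinuousOn α {t : ℝ | 0 ≤ t ∧ ENNReal.ofReal t < c₁} ∧
        ContinuousOn β {t : ℝ | 0 ≤ t ∧ ENNReal.ofReal t < c₂} ∧
        (∀ t : ℝ, 0 ≤ t → ENNReal.ofReal t < c₁ → α t ∈ ball x₀ ε₀ \ {x₀}) ∧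
        (∀ t : ℝ, 0 ≤ t → ENNReal.ofReal t < c₂ → β t ∈ ball x₀ ε₀ \ {x₀}) ∧
        (∀ t : ℝ, 0 ≤ t → ENNReal.ofReal t < c₁ → f (α t) ∈ ball y₁ ε₁) ∧
        (∀ t : ℝ, 0 ≤ t → ENNReal.ofReal t < c₂ → f (β t) ∈ ball y₂ ε₂) ∧
        Tendsto α (leftEndFilter c₁) (𝓝 x₀) ∧
        Tendsto β (leftEndFilter c₂) (𝓝 x₀) := by
  obtain ⟨α, hαcont, hα, hαlim⟩ :=
    exists_curve_of_mem_clusterSetAt hD hf hopen hC hy₁ hε₀ hball hε₁ hd₁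
  obtain ⟨β, hβcont, hβ, hβlim⟩ :=
    exists_curve_of_mem_clusterSetAt hD hf hopen hC hy₂ hε₀ hball hε₂ hd₂
  exact ⟨⊤, ⊤, ENNReal.zero_lt_top, ENNReal.zero_lt_top, α, β,
    hαcont.mono fun t ht ↦ ht.1, hβcont.mono fun t ht ↦ ht.1,
    fun t ht _ ↦ (hα t ht).1, fun t ht _ ↦ (hβ t ht).1,
    fun t ht _ ↦ (hα t ht).2, fun t ht _ ↦ (hβ t ht).2,
    hαlim.mono_left leftEndFilter_top_le_atTop, hβlim.mono_left leftEndFilter_top_le_atTop⟩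
end
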